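/- Let m ∈ ℤ and let L_m be the splitting field of f_m over ℚ, a totally real cyclic cubic number field. Let p₁, …, p_s be the primes different from 3 that divide m²+3m+9 with an exponent not congruent to 0 modulo 3. Then the discriminant of the number field L_m equals 𝔣_m², where the conductor 𝔣_m is given by: 𝔣_m = p₁⋯p_s if m ≢ 0 (mod 3) or m ≡ 12 (mod 27), and 𝔣_m = 9·p₁⋯p_s if m ≡ 0 (mod 3) and m ≢ 12 (mod 27). -/

import Mathlib

open Polynomial

/-- The simplest cubic polynomial `f_m(X) = X³ − mX² − (m+3)X − 1` over `ℚ`. -/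
noncomputable def f (m : ℤ) : ℚ[X] :=
  X ^ 3 - C (m : ℚ) * X ^ 2 - C ((m : ℚ) + 3) * X - 1

/-- The primes `p ≠ 3` dividing `m²+3m+9` with an exponent not congruent to `0` mod `3`. -/
def ramifiedPrimes (m : ℤ) : Finset ℕ :=
  Finset.filter (fun p : ℕ => p ≠ 3 ∧ ¬(3 ∣ (m ^ 2 + 3 * m + 9).natAbs.factorization p))
    (m ^ 2 + 3 * m + 9).natAbs.primeFactors

/-- The conductor `𝔣_m` of the simplest cubic field `L_m`: the product of the primes `p ≠ 3`
dividing `m²+3m+9` with exponent not divisible by `3`, times `9` when `3 ∣ m` and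
`m ≢ 12 (mod 27)`. -/
def frakf (m : ℤ) : ℤ :=
  (if 3 ∣ m ∧ m % 27 ≠ 12 then 9 else 1) * ∏ p ∈ ramifiedPrimes m, (p : ℤ)

open Module in
theorem cubic_basis {K : Type*} [Field K] [NumberField K] (h3 : finrank ℚ K = 3) (z : K)
    (hz : ∀ q : ℚ, z ≠ algebraMap ℚ K q) :
    ∃ B : Basis (Fin 3) ℚ K, B 0 = 1 ∧ B 1 = z ∧ B 2 = z ^ 2 := by
  have hint : IsIntegral ℚ z := Algebra.IsIntegral.isIntegral z
  have hd : (minpoly ℚ z).natDegree = 3 := by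
    have h1 : (minpoly ℚ z).natDegree ∣ 3 := h3 ▸ minpoly.degree_dvd hint
    rcases (Nat.dvd_prime Nat.prime_three).1 h1 with h | h
    · exfalso
      obtain ⟨q, hq⟩ := (minpoly.natDegree_eq_one_iff).1 h
      exact hz q hq.symm
    · exact h
  have li := linearIndependent_pow (K := ℚ) z
  have li' : LinearIndependent ℚ (fun i : Fin 3 => z ^ (i : ℕ)) := by
    rw [hd] at li
    exact li
  refine ⟨basisOfLinearIndependentOfCardEqFinrank li' (by simp [h3]), ?_, ?_, ?_⟩ <;> simp

open Module in
theorem cubic_leftMul {K : Type*} [Field K] [NumberField K] (B : Basis (Fin 3) ℚ K) (z : K)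
    (h0 : B 0 = 1) (h1 : B 1 = z) (h2 : B 2 = z ^ 2) (a b c : ℚ)
    (h : z ^ 3 + algebraMap ℚ K a * z ^ 2 + algebraMap ℚ K b * z + algebraMap ℚ K c = 0) :
    Algebra.leftMulMatrix B z = !![0, 0, -c; 1, 0, -b; 0, 1, -a] := by
  have e0 : z * B 0 = B 1 := by rw [h0, h1, mul_one]
  have e1 : z * B 1 = B 2 := by rw [h1, h2]; ring
  have e2 : z * B 2 = (-c) • B 0 + (-b) • B 1 + (-a) • B 2 := by
    rw [h0, h1, h2]
    simp only [Algebra.smul_def, map_neg]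
    linear_combination h
  ext i j
  rw [Algebra.leftMulMatrix_eq_repr_mul]
  fin_cases j
  · simp only [Fin.zero_eta, e0]
    fin_cases i <;> simp
  · simp only [Fin.mk_one, e1]
    fin_cases i <;> simp
  · simp only [Fin.reduceFinMk, e2]
    fin_cases i <;> simp

open Module in
theorem cubic_key {K : Type*} [Field K] [NumberField K] (h3 : finrank ℚ K = 3) (z : K)
    (hz : ∀ q : ℚ, z ≠ algebraMap ℚ K q) (a b c : ℤ)
    (h : z ^ 3 + (a : K) * z ^ 2 + (b : K) * z + (c : K) = 0) :
    ∃ M : ℤ, a ^ 2 * b ^ 2 - 4 * b ^ 3 - 4 * a ^ 3 * c - 27 * c ^ 2 + 18 * a * b * c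
        = M ^ 2 * NumberField.discr K ∧
      ∀ p : ℕ, p.Prime → (p : ℤ) ∣ a → (p : ℤ) ∣ b → (p : ℤ) ∣ c → ¬ (p : ℤ) ^ 2 ∣ c →
        ¬ (p : ℤ) ∣ M := by
  obtain ⟨B, h0, h1, h2⟩ := cubic_basis h3 z hz
  have hL := cubic_leftMul B z h0 h1 h2 a b c (by simpa using h)
  have hi : IsIntegral ℤ z := by
    refine ⟨X ^ 3 + C a * X ^ 2 + C b * X + C c, by monicity!, ?_⟩
    simpa [eval₂_add, eval₂_mul, eval₂_pow, -eq_intCast, -map_intCast, eval₂_C] using h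
  obtain ⟨w, rfl⟩ : ∃ w : NumberField.RingOfIntegers K, (w : K) = z := ⟨⟨z, hi⟩, rfl⟩
  have tr : ∀ k : ℕ, (Algebra.trace ℤ _ (w ^ k) : ℚ)
      = Matrix.trace ((!![0, 0, -(c : ℚ); 1, 0, -(b : ℚ); 0, 1, -(a : ℚ)]) ^ k) := by
    intro k
    rw [Algebra.coe_trace_int, Algebra.trace_eq_matrix_trace B]
    push_cast
    rw [map_pow, hL]
  have nm : Algebra.norm ℤ w = - c := by
    have : (Algebra.norm ℤ w : ℚ) = ((-c : ℤ) : ℚ) := by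
      rw [Algebra.coe_norm_int, Algebra.norm_eq_matrix_det B, hL, Matrix.det_fin_three]
      simp
    exact_mod_cast this
  have hrel : w ^ 3 + (a : NumberField.RingOfIntegers K) * w ^ 2 + b * w + c = 0 := by
    apply NumberField.RingOfIntegers.ext
    simpa using h
  have hr3 : finrank ℤ (NumberField.RingOfIntegers K) = 3 := by
    rw [NumberField.RingOfIntegers.rank, h3]
  let I : Basis (Fin 3) ℤ (NumberField.RingOfIntegers K) := finBasisOfFinrankEq ℤ _ hr3
  let v : Fin 3 → NumberField.RingOfIntegers K := fun i => w ^ (i : ℕ)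
  have hdis : Algebra.discr ℤ v = (I.toMatrix v).det ^ 2 * NumberField.discr K := by
    rw [← NumberField.discr_eq_discr K I, ← Algebra.discr_of_matrix_vecMul,
      Basis.toMatrix_map_vecMul]
  have hdis2 : Algebra.discr ℤ v
      = a ^ 2 * b ^ 2 - 4 * b ^ 3 - 4 * a ^ 3 * c - 27 * c ^ 2 + 18 * a * b * c := by
    have : (Algebra.discr ℤ v : ℚ) =
      ((a ^ 2 * b ^ 2 - 4 * b ^ 3 - 4 * a ^ 3 * c - 27 * c ^ 2 + 18 * a * b * c : ℤ) : ℚ) := by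
      rw [Algebra.discr_def, Matrix.det_fin_three]
      simp only [Algebra.traceMatrix_apply, Algebra.traceForm_apply, v, ← pow_add]
      push_cast
      simp only [tr]
      simp [pow_succ, Matrix.trace_fin_three]
      ring
    exact_mod_cast this
  refine ⟨(I.toMatrix v).det, by rw [← hdis, hdis2], ?_⟩
  intro p hp ⟨a', ha⟩ ⟨b', hb⟩ ⟨c', hc⟩ hpc hpM
  have := Fact.mk hp
  have hpZ : Prime (p : ℤ) := Nat.prime_iff_prime_int.1 hp
  have hc' : ¬ (p : ℤ) ∣ c' := by
    rintro ⟨d, rfl⟩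
    exact hpc ⟨d, by rw [hc]; ring⟩
  -- the basic norm fact
  have hbase : ∀ t : ℤ, (p : NumberField.RingOfIntegers K) ∣ t * w ^ 2 → (p : ℤ) ∣ t := by
    rintro t ⟨u, hu⟩
    have hn := congrArg (Algebra.norm ℤ) hu
    rw [map_mul, map_mul, map_pow, nm] at hn
    have e1 : Algebra.norm ℤ (t : NumberField.RingOfIntegers K) = t ^ 3 := by
      have := Algebra.norm_algebraMap_of_basis I t
      simpa using this
    have e2 : Algebra.norm ℤ (p : NumberField.RingOfIntegers K) = (p : ℤ) ^ 3 := by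
      have := Algebra.norm_algebraMap_of_basis I (p : ℤ)
      simpa using this
    rw [e1, e2] at hn
    have hn' : t ^ 3 * c' ^ 2 = p * Algebra.norm ℤ u := by
      have hp0 : (p : ℤ) ^ 2 ≠ 0 := pow_ne_zero _ hpZ.ne_zero
      apply mul_left_cancel₀ hp0
      rw [hc] at hn
      linear_combination hn
    rcases hpZ.dvd_or_dvd (Dvd.intro _ hn'.symm) with h | h
    · exact hpZ.dvd_of_dvd_pow h
    · exact absurd (hpZ.dvd_of_dvd_pow h) hc'
  have hw3 : (p : NumberField.RingOfIntegers K) ∣ w ^ 3 := by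
    refine ⟨-(a' * w ^ 2 + b' * w + c'), ?_⟩
    rw [ha, hb, hc] at hrel
    push_cast at hrel
    linear_combination hrel
  have hind : ∀ t0 t1 t2 : ℤ, (p : NumberField.RingOfIntegers K) ∣ t0 + t1 * w + t2 * w ^ 2 →
      (p : ℤ) ∣ t0 ∧ (p : ℤ) ∣ t1 ∧ (p : ℤ) ∣ t2 := by
    intro t0 t1 t2 ht
    have cast : ∀ t : ℤ, (p : ℤ) ∣ t → (p : NumberField.RingOfIntegers K) ∣ t := by
      rintro t ⟨s, rfl⟩
      exact ⟨s, by push_cast; ring⟩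
    have d0 : (p : ℤ) ∣ t0 := by
      apply hbase
      have := (ht.mul_right (w ^ 2)).sub (hw3.mul_right (t1 + t2 * w))
      convert this using 1
      ring
    have d1 : (p : ℤ) ∣ t1 := by
      apply hbase
      have := ((ht.sub (cast _ d0)).mul_right w).sub (hw3.mul_right t2)
      convert this using 1
      ring
    refine ⟨d0, d1, ?_⟩
    apply hbase
    have := (ht.sub (cast _ d0)).sub ((cast _ d1).mul_right w)
    convert this using 1
    ring
  have hdet : ((I.toMatrix v).map (Int.castRingHom (ZMod p))).det = 0 := by
    rw [← RingHom.mapMatrix_apply, ← RingHom.map_det, eq_intCast, ZMod.intCast_zmod_eq_zero_iff_dvd]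
    exact hpM
  obtain ⟨s, hs0, hs⟩ := Matrix.exists_mulVec_eq_zero_iff.2 hdet
  choose t ht using fun i => ZMod.intCast_surjective (s i)
  have hcomb : (p : NumberField.RingOfIntegers K) ∣ ∑ j, (t j : NumberField.RingOfIntegers K) * v j := by
    have e : ∑ j, (t j : NumberField.RingOfIntegers K) * v j
        = ∑ i, ((∑ j, I.toMatrix v i j * t j : ℤ) : NumberField.RingOfIntegers K) * I i := by
      have : ∀ j, v j = ∑ i, (I.toMatrix v i j : NumberField.RingOfIntegers K) * I i := by
        intro j
        have := I.sum_toMatrix_smul_self v j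
        simp only [zsmul_eq_mul] at this
        exact this.symm
      conv_lhs => simp only [this, Finset.mul_sum]
      rw [Finset.sum_comm]
      refine Finset.sum_congr rfl fun i _ => ?_
      push_cast
      rw [Finset.sum_mul]
      refine Finset.sum_congr rfl fun j _ => ?_
      ring
    rw [e]
    refine Finset.dvd_sum fun i _ => Dvd.dvd.mul_right ?_ _
    have : (p : ℤ) ∣ ∑ j, I.toMatrix v i j * t j := by
      rw [← ZMod.intCast_zmod_eq_zero_iff_dvd]
      have := congrFun hs i
      simp only [Matrix.mulVec, dotProduct, Matrix.map_apply, Pi.zero_apply, eq_intCast] at this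
      push_cast
      simp only [ht]
      exact this
    obtain ⟨q, hq⟩ := this
    exact ⟨q, by rw [hq]; push_cast; ring⟩
  rw [Fin.sum_univ_three] at hcomb
  obtain ⟨d0, d1, d2⟩ := hind (t 0) (t 1) (t 2) (by simpa [v] using hcomb)
  apply hs0
  funext i
  rw [← ht i, Pi.zero_apply, ZMod.intCast_zmod_eq_zero_iff_dvd]
  fin_cases i
  · exact d0
  · exact d1
  · exact d2

theorem f_root_rel {K : Type*} [Field K] [NumberField K] (m : ℤ) (y : K)
    (hy : aeval y (f m) = 0) : y ^ 3 - m * y ^ 2 - (m + 3) * y - 1 = 0 := by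
  simpa [f] using hy

theorem root_irrational {K : Type*} [Field K] [NumberField K] (m : ℤ) (y : K)
    (hy : y ^ 3 - m * y ^ 2 - (m + 3) * y - 1 = 0) (q : ℚ) : y ≠ algebraMap ℚ K q := by
  rintro rfl
  have hq : q ^ 3 - m * q ^ 2 - (m + 3) * q - 1 = 0 := by
    apply (algebraMap ℚ K).injective
    simpa using hy
  have hi : IsIntegral ℤ q := by
    refine ⟨X ^ 3 + C (-m) * X ^ 2 + C (-(m + 3)) * X + C (-1), by monicity!, ?_⟩
    simp only [eval₂_add, eval₂_mul, eval₂_pow, eval₂_C, eval₂_X]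
    simp only [map_neg, map_add, eq_intCast, map_one, map_ofNat]
    linear_combination hq
  obtain ⟨n, rfl⟩ := IsIntegrallyClosed.isIntegral_iff.1 hi
  simp only [eq_intCast] at hq
  have hn : n * (n ^ 2 - m * n - (m + 3)) = 1 := by
    have : (n : ℚ) * (n ^ 2 - m * n - (m + 3)) = 1 := by linear_combination hq
    exact_mod_cast this
  rcases Int.isUnit_iff.1 (IsUnit.of_mul_eq_one _ hn) with rfl | rfl
  · omega
  · omega

open Module in
theorem splitting_finrank {K : Type*} [Field K] [NumberField K] (m : ℤ)
    (hK : IsSplittingField ℚ K (f m)) :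
    ∃ r : K, r ^ 3 - m * r ^ 2 - (m + 3) * r - 1 = 0 ∧ finrank ℚ K = 3 := by
  have hmon : (f m).Monic := by unfold f; monicity!
  have hdeg : (f m).natDegree = 3 := by unfold f; compute_degree!
  have hs := hK.splits
  obtain ⟨r, hr⟩ := hs.exists_eval_eq_zero (by
    rw [degree_map, degree_eq_natDegree hmon.ne_zero, hdeg]; norm_num)
  rw [eval_map_algebraMap] at hr
  have hr' := f_root_rel m r hr
  refine ⟨r, hr', ?_⟩
  have hrat := root_irrational m r hr'
  have hint : IsIntegral ℚ r := Algebra.IsIntegral.isIntegral r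
  have h0 : r ≠ 0 := by
    rintro rfl; exact hrat 0 (by simp)
  have h1 : 1 + r ≠ 0 := by
    intro h
    exact hrat (-1) (by simp; linear_combination h)
  have hirr : Irreducible (f m) := by
    refine (irreducible_iff_roots_eq_zero_of_degree_le_three (by omega) (by omega)).2 ?_
    rw [Multiset.eq_zero_iff_forall_notMem]
    intro q hq
    have := (mem_roots hmon.ne_zero).1 hq
    refine root_irrational (K := K) m (algebraMap ℚ K q) (f_root_rel m _ ?_) q rfl
    rw [aeval_algebraMap_apply, coe_aeval_eq_eval]
    rw [this]; simp
  have hmin : minpoly ℚ r = f m := (minpoly.eq_of_irreducible_of_monic hirr hr hmon).symm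
  have htop : IntermediateField.adjoin ℚ {r} = ⊤ := by
    rw [← IntermediateField.toSubalgebra_injective.eq_iff, IntermediateField.top_toSubalgebra]
    rw [eq_top_iff, ← hK.adjoin_rootSet]
    apply Algebra.adjoin_le
    intro y hy
    have hy' := f_root_rel m y (aeval_eq_zero_of_mem_rootSet hy)
    have hm : r ∈ IntermediateField.adjoin ℚ {r} := IntermediateField.mem_adjoin_simple_self ℚ r
    have hm1 : 1 + r ∈ IntermediateField.adjoin ℚ {r} := add_mem (one_mem _) hm
    have : (y - r) * ((1 + r) * y + 1) * (r * y + (1 + r)) = 0 := by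
      linear_combination r * (1 + r) * hy' - (y ^ 2 + y) * hr'
    show y ∈ IntermediateField.adjoin ℚ {r}
    rcases mul_eq_zero.1 this with h | h
    · rcases mul_eq_zero.1 h with h | h
      · rw [sub_eq_zero.1 h]; exact hm
      · have : y = -(1 + r)⁻¹ := by field_simp; linear_combination h
        rw [this]
        exact neg_mem (inv_mem hm1)
    · have : y = -((1 + r) * r⁻¹) := by field_simp; linear_combination h
      rw [this]
      exact neg_mem (mul_mem hm1 (inv_mem hm))
  have := IntermediateField.adjoin.finrank hint
  rw [htop, IntermediateField.finrank_top', hmin, hdeg] at this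
  exact this

open Module in
theorem val_unram {K : Type*} [Field K] [NumberField K] (h3 : finrank ℚ K = 3) (z : K)
    (hz : ∀ q : ℚ, z ≠ algebraMap ℚ K q) (a b c : ℤ)
    (h : z ^ 3 + (a : K) * z ^ 2 + (b : K) * z + (c : K) = 0) (p : ℕ)
    (hd : ¬ (p : ℤ) ∣ a ^ 2 * b ^ 2 - 4 * b ^ 3 - 4 * a ^ 3 * c - 27 * c ^ 2 + 18 * a * b * c) :
    padicValInt p (NumberField.discr K) = 0 := by
  obtain ⟨M, hM, -⟩ := cubic_key h3 z hz a b c h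
  apply padicValInt.eq_zero_of_not_dvd
  intro hp
  exact hd (hM ▸ hp.mul_left _)

open Module in
theorem val_eisen {K : Type*} [Field K] [NumberField K] (h3 : finrank ℚ K = 3) (z : K)
    (hz : ∀ q : ℚ, z ≠ algebraMap ℚ K q) (a b c : ℤ)
    (h : z ^ 3 + (a : K) * z ^ 2 + (b : K) * z + (c : K) = 0) (p : ℕ) (hp : p.Prime)
    (ha : (p : ℤ) ∣ a) (hb : (p : ℤ) ∣ b) (hc : (p : ℤ) ∣ c) (hc2 : ¬ (p : ℤ) ^ 2 ∣ c)
    (k : ℕ) (u : ℤ) (hu : ¬ (p : ℤ) ∣ u)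
    (hd : a ^ 2 * b ^ 2 - 4 * b ^ 3 - 4 * a ^ 3 * c - 27 * c ^ 2 + 18 * a * b * c = p ^ k * u) :
    padicValInt p (NumberField.discr K) = k := by
  obtain ⟨M, hM, hpM⟩ := cubic_key h3 z hz a b c h
  have hpM := hpM p hp ha hb hc hc2
  have := Fact.mk hp
  have hu0 : u ≠ 0 := by rintro rfl; simp at hu
  have hM0 : M ≠ 0 := by rintro rfl; simp at hpM
  have hp0 : (p : ℤ) ≠ 0 := by exact_mod_cast hp.ne_zero
  have hD := NumberField.discr_ne_zero K
  have e := congrArg (padicValInt p) (hd.symm.trans hM)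
  rw [padicValInt.mul (pow_ne_zero _ hp0) hu0, padicValInt.mul (pow_ne_zero _ hM0) hD,
    padicValInt.eq_zero_of_not_dvd hu, pow_two, padicValInt.mul hM0 hM0,
    padicValInt.eq_zero_of_not_dvd hpM] at e
  have e2 : padicValInt p ((p : ℤ) ^ k) = k := by
    rw [← Nat.cast_pow, padicValInt.of_nat, padicValNat.prime_pow]
  rw [e2] at e
  omega

theorem four_N (m : ℤ) : 4 * (m ^ 2 + 3 * m + 9) = (2 * m + 3) ^ 2 + 27 := by ring

theorem N_pos (m : ℤ) : 0 < m ^ 2 + 3 * m + 9 := by nlinarith [sq_nonneg (2 * m + 3)]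

theorem prime_not_dvd_three {p : ℕ} (hp : p.Prime) (h3 : p ≠ 3) : ¬ (p : ℤ) ∣ 27 := by
  intro h
  have h' : p ∣ 3 ^ 3 := by exact_mod_cast h
  exact h3 ((Nat.prime_dvd_prime_iff_eq hp Nat.prime_three).1 (hp.dvd_of_dvd_pow h'))

theorem not_dvd_t {p : ℕ} (hp : p.Prime) (h3 : p ≠ 3) (m : ℤ)
    (hN : (p : ℤ) ∣ m ^ 2 + 3 * m + 9) : ¬ (p : ℤ) ∣ 2 * m + 3 := by
  intro h
  apply prime_not_dvd_three hp h3
  have : (27 : ℤ) = 4 * (m ^ 2 + 3 * m + 9) - (2 * m + 3) * (2 * m + 3) := by ring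
  rw [this]
  exact (hN.mul_left 4).sub (h.mul_left _)

/-- The trace zero element `x = 3r - m`. -/
theorem x_facts {K : Type*} [Field K] [NumberField K] (m : ℤ) (r : K)
    (hr : r ^ 3 - m * r ^ 2 - (m + 3) * r - 1 = 0) :
    ∃ x : K, x ^ 3 = 3 * ((m ^ 2 + 3 * m + 9 : ℤ) : K) * x
        + (2 * m + 3) * ((m ^ 2 + 3 * m + 9 : ℤ) : K) ∧
      (∀ q : ℚ, x ≠ algebraMap ℚ K q) ∧ (∀ q : ℚ, x ^ 2 ≠ algebraMap ℚ K q) := by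
  have hrat := root_irrational m r hr
  have hx : (3 * r - m) ^ 3 = 3 * ((m ^ 2 + 3 * m + 9 : ℤ) : K) * (3 * r - m)
        + (2 * m + 3) * ((m ^ 2 + 3 * m + 9 : ℤ) : K) := by
    push_cast
    linear_combination 27 * hr
  have hxrat : ∀ q : ℚ, 3 * r - m ≠ algebraMap ℚ K q := by
    intro q hq
    apply hrat ((q + m) / 3)
    simp only [map_div₀, map_add, map_intCast, map_ofNat]
    field_simp
    linear_combination hq
  refine ⟨3 * r - m, hx, hxrat, ?_⟩
  intro q hq
  set x := 3 * r - (m : K) with hxdef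
  have e : (algebraMap ℚ K (q - 3 * (m ^ 2 + 3 * m + 9 : ℤ))) * x
      = algebraMap ℚ K ((2 * m + 3) * (m ^ 2 + 3 * m + 9 : ℤ)) := by
    simp only [map_sub, map_mul, map_add, map_intCast, map_ofNat, ← hq]
    linear_combination hx
  by_cases h0 : q - 3 * ((m ^ 2 + 3 * m + 9 : ℤ) : ℚ) = 0
  · rw [h0, map_zero, zero_mul] at e
    have e' := (map_eq_zero (algebraMap ℚ K)).1 e.symm
    have e'' : (2 * m + 3) * (m ^ 2 + 3 * m + 9) = 0 := by exact_mod_cast e'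
    rcases mul_eq_zero.1 e'' with h | h
    · omega
    · exact (N_pos m).ne' h
  · apply hxrat (((2 * m + 3) * (m ^ 2 + 3 * m + 9 : ℤ)) / (q - 3 * ((m ^ 2 + 3 * m + 9 : ℤ) : ℚ)))
    rw [map_div₀, eq_div_iff, mul_comm, e]
    rwa [Ne, map_eq_zero]

theorem irr_of_mul {K : Type*} [Field K] [NumberField K] (x z : K) (s : ℤ) (h : s * z = x)
    (hx : ∀ q : ℚ, x ≠ algebraMap ℚ K q) (q : ℚ) : z ≠ algebraMap ℚ K q := by
  rintro rfl
  exact hx (s * q) (by rw [← h]; simp)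

open Module in
theorem val_ne_three {K : Type*} [Field K] [NumberField K] (h3 : finrank ℚ K = 3) (m : ℤ) (r : K)
    (hr : r ^ 3 - m * r ^ 2 - (m + 3) * r - 1 = 0) (p : ℕ) (hp : p.Prime) (hp3 : p ≠ 3) :
    padicValInt p (NumberField.discr K) = 2 * (if p ∈ ramifiedPrimes m then 1 else 0) := by
  obtain ⟨x, hx, hx1, hx2⟩ := x_facts m r hr
  have hpZ : Prime (p : ℤ) := Nat.prime_iff_prime_int.1 hp
  have h27 := prime_not_dvd_three hp hp3
  have hpK : (p : K) ≠ 0 := by exact_mod_cast hp.ne_zero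
  have hN0 := (N_pos m).ne'
  set N := m ^ 2 + 3 * m + 9 with hN
  have h4 : 4 * N = (2 * m + 3) ^ 2 + 27 := by rw [hN]; ring
  set e := N.natAbs.factorization p with he
  have hmem : p ∈ ramifiedPrimes m ↔ ¬ 3 ∣ e := by
    unfold ramifiedPrimes
    rw [Finset.mem_filter, ← hN, ← he]
    refine ⟨fun h => h.2.2, fun h => ⟨?_, hp3, h⟩⟩
    rw [← Nat.support_factorization, Finsupp.mem_support_iff, ← he]
    intro h0
    simp [h0] at h
  obtain ⟨n, hn, hNn⟩ : ∃ n : ℤ, ¬ (p : ℤ) ∣ n ∧ N = p ^ e * n := by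
    have h1 : p ^ e ∣ N.natAbs := Nat.ordProj_dvd _ _
    have h2 : (p : ℤ) ^ e ∣ N := by
      rw [← Int.natCast_pow, Int.natCast_dvd]; exact h1
    obtain ⟨n, hn⟩ := h2
    refine ⟨n, ?_, hn⟩
    rintro ⟨n', rfl⟩
    have : p ^ (e + 1) ∣ N.natAbs := by
      rw [← Int.natCast_dvd]
      exact ⟨n', by rw [hn]; push_cast; ring⟩
    exact Nat.pow_succ_factorization_not_dvd (Int.natAbs_ne_zero.2 hN0) hp this
  clear_value e
  have ht : e ≠ 0 → ¬ (p : ℤ) ∣ 2 * m + 3 := by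
    intro h0
    apply not_dvd_t hp hp3
    rw [← hN, hNn]
    exact (dvd_pow_self _ h0).mul_right _
  have hKN : ((N : ℤ) : K) = (p : K) ^ e * n := by rw [hNn]; push_cast; rfl
  rw [hKN] at hx
  have hmod : e % 3 = 0 ∨ e % 3 = 1 ∨ e % 3 = 2 := by omega
  obtain ⟨k, hk⟩ : ∃ k, k = e / 3 := ⟨_, rfl⟩
  rcases hmod with h | h | h
  · have hek : e = 3 * k := by omega
    rw [if_neg (by rw [hmem]; omega)]
    subst hek
    refine val_unram h3 (x / p ^ k) (irr_of_mul x _ ((p : ℤ) ^ k) ?_ hx1) 0 (-3 * p ^ k * n)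
      (-(2 * m + 3) * n) ?_ p ?_
    · push_cast; field_simp
    · push_cast
      have hz : x = p ^ k * (x / p ^ k) := by field_simp
      generalize x / (p : K) ^ k = z at hz ⊢
      rw [hz] at hx
      have hpp : (p : K) ^ (3 * k) ≠ 0 := pow_ne_zero _ hpK
      apply mul_left_cancel₀ hpp
      linear_combination hx
    · have : (0 : ℤ) ^ 2 * (-3 * p ^ k * n) ^ 2 - 4 * (-3 * p ^ k * n) ^ 3
          - 4 * 0 ^ 3 * (-(2 * m + 3) * n) - 27 * (-(2 * m + 3) * n) ^ 2
          + 18 * 0 * (-3 * p ^ k * n) * (-(2 * m + 3) * n) = 27 * 27 * (n * n) := by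
        rw [hNn] at h4
        linear_combination 27 * n ^ 2 * h4
      rw [this]
      intro hh
      rcases hpZ.dvd_or_dvd hh with hh | hh
      · rcases hpZ.dvd_or_dvd hh with hh | hh <;> exact h27 hh
      · rcases hpZ.dvd_or_dvd hh with hh | hh <;> exact hn hh
  · have hek : e = 3 * k + 1 := by omega
    rw [if_pos (by rw [hmem]; omega)]
    have ht' := ht (by omega)
    subst hek
    refine val_eisen h3 (x / p ^ k) (irr_of_mul x _ ((p : ℤ) ^ k) ?_ hx1) 0 (-3 * p ^ (k + 1) * n)
      (p * (-(2 * m + 3) * n)) ?_ p hp (dvd_zero _) ?_ (dvd_mul_right _ _) ?_ (2 * 1)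
      (27 * 27 * (n * n)) ?_ ?_
    · push_cast; field_simp
    · push_cast
      have hz : x = p ^ k * (x / p ^ k) := by field_simp
      generalize x / (p : K) ^ k = z at hz ⊢
      rw [hz] at hx
      have hpp : (p : K) ^ (3 * k) ≠ 0 := pow_ne_zero _ hpK
      apply mul_left_cancel₀ hpp
      linear_combination hx
    · exact ⟨-3 * p ^ k * n, by ring⟩
    · rw [pow_two, mul_dvd_mul_iff_left hpZ.ne_zero]
      intro hh
      rcases hpZ.dvd_or_dvd hh with hh | hh
      · exact ht' (dvd_neg.1 hh)
      · exact hn hh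
    · intro hh
      rcases hpZ.dvd_or_dvd hh with hh | hh
      · rcases hpZ.dvd_or_dvd hh with hh | hh <;> exact h27 hh
      · rcases hpZ.dvd_or_dvd hh with hh | hh <;> exact hn hh
    · rw [hNn] at h4
      linear_combination 27 * n ^ 2 * p ^ 2 * h4
  · have hek : e = 3 * k + 2 := by omega
    rw [if_pos (by rw [hmem]; omega)]
    have ht' := ht (by omega)
    subst hek
    refine val_eisen h3 (x ^ 2 / p ^ (2 * k + 1)) (irr_of_mul (x ^ 2) _ ((p : ℤ) ^ (2 * k + 1)) ?_ hx2)
      (-6 * p ^ (k + 1) * n) (9 * p ^ (2 * k + 2) * n ^ 2)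
      (p * (-(2 * m + 3) ^ 2 * n ^ 2)) ?_ p hp ?_ ?_ (dvd_mul_right _ _) ?_ (2 * 1)
      ((27 * 27) * ((2 * m + 3) ^ 2 * n ^ 4)) ?_ ?_
    · push_cast; field_simp
    · have e1 : x * (x ^ 2 - 3 * (p ^ (3 * k + 2) * n)) = (2 * m + 3) * (p ^ (3 * k + 2) * n) := by
        linear_combination hx
      have e2 := congrArg (· ^ 2) e1
      push_cast
      have hz : x ^ 2 = p ^ (2 * k + 1) * (x ^ 2 / p ^ (2 * k + 1)) := by field_simp
      generalize x ^ 2 / (p : K) ^ (2 * k + 1) = z at hz ⊢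
      rw [mul_pow x, hz] at e2
      have hpp : (p : K) ^ (6 * k + 3) ≠ 0 := pow_ne_zero _ hpK
      apply mul_left_cancel₀ hpp
      linear_combination e2
    · exact ⟨-6 * p ^ k * n, by ring⟩
    · exact ⟨9 * p ^ (2 * k + 1) * n ^ 2, by ring⟩
    · rw [pow_two, mul_dvd_mul_iff_left hpZ.ne_zero]
      intro hh
      rcases hpZ.dvd_or_dvd hh with hh | hh
      · exact ht' (hpZ.dvd_of_dvd_pow (dvd_neg.1 hh))
      · exact hn (hpZ.dvd_of_dvd_pow hh)
    · intro hh
      rcases hpZ.dvd_or_dvd hh with hh | hh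
      · rcases hpZ.dvd_or_dvd hh with hh | hh <;> exact h27 hh
      · rcases hpZ.dvd_or_dvd hh with hh | hh
        · exact ht' (hpZ.dvd_of_dvd_pow hh)
        · exact hn (hpZ.dvd_of_dvd_pow hh)
    · rw [hNn] at h4
      linear_combination 27 * n ^ 4 * p ^ 2 * (2 * m + 3) ^ 2 * h4

open Module in
theorem val_three {K : Type*} [Field K] [NumberField K] (h3 : finrank ℚ K = 3) (m : ℤ) (r : K)
    (hr : r ^ 3 - m * r ^ 2 - (m + 3) * r - 1 = 0) :
    padicValInt 3 (NumberField.discr K) = 2 * (if 3 ∣ m ∧ m % 27 ≠ 12 then 2 else 0) := by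
  obtain ⟨x, hx, hx1, hx2⟩ := x_facts m r hr
  have hrat := root_irrational m r hr
  have hpZ : Prime (3 : ℤ) := Int.prime_three
  have hsq : ∀ t : ℤ, ¬ (3 : ℤ) ∣ t → ¬ (3 : ℤ) ∣ t ^ 2 := fun t ht h => ht (hpZ.dvd_of_dvd_pow h)
  by_cases hm : (3 : ℤ) ∣ m
  swap
  · rw [if_neg (fun h => hm h.1)]
    refine val_unram h3 r hrat (-m) (-(m + 3)) (-1) ?_ 3 ?_
    · push_cast; linear_combination hr
    · have : (-m) ^ 2 * (-(m + 3)) ^ 2 - 4 * (-(m + 3)) ^ 3 - 4 * (-m) ^ 3 * (-1) - 27 * (-1) ^ 2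
        + 18 * (-m) * (-(m + 3)) * (-1) = (m * m + 3 * (m + 3)) ^ 2 := by ring
      rw [this]
      apply hsq
      intro hh
      have : (3 : ℤ) ∣ m * m := by
        have := hh.sub (dvd_mul_right (3 : ℤ) (m + 3))
        simpa using this
      rcases hpZ.dvd_or_dvd this with h | h <;> exact hm h
  by_cases h12 : m % 27 = 12
  · rw [if_neg (fun h => h.2 h12)]
    obtain ⟨j, rfl⟩ : ∃ j, m = 12 + 27 * j := ⟨m / 27, by omega⟩
    refine val_unram h3 (x / 9) (irr_of_mul x _ 9 ?_ hx1) 0 (-(7 + 27 * j + 27 * j ^ 2))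
      (-(1 + 2 * j) * (7 + 27 * j + 27 * j ^ 2)) ?_ 3 ?_
    · push_cast; field_simp
    · push_cast at hx ⊢
      linear_combination hx / 729
    · intro hh
      have h4 : (3 : ℤ) ∣ 4 * (7 + 27 * j + 27 * j ^ 2) ^ 3 := by
        have := hh.add (dvd_mul_right (3 : ℤ) (9 * (-(1 + 2 * j) * (7 + 27 * j + 27 * j ^ 2)) ^ 2))
        ring_nf at this ⊢
        exact this
      rcases hpZ.dvd_or_dvd h4 with h | h
      · omega
      · have := hpZ.dvd_of_dvd_pow h
        omega
  rw [if_pos ⟨hm, h12⟩]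
  obtain ⟨k, rfl⟩ := hm
  by_cases hk : k % 3 = 1
  · obtain ⟨j, rfl⟩ : ∃ j, k = 1 + 3 * j := ⟨k / 3, by omega⟩
    have hn : ¬ (3 : ℤ) ∣ 3 * j ^ 2 + 3 * j + 1 := by omega
    have ht : ¬ (3 : ℤ) ∣ 1 + 2 * j := by omega
    refine val_eisen h3 (x ^ 2 / 27) (irr_of_mul (x ^ 2) _ 27 ?_ hx2)
      (-6 * (3 * j ^ 2 + 3 * j + 1)) (9 * (3 * j ^ 2 + 3 * j + 1) ^ 2)
      (3 * (-(3 * j ^ 2 + 3 * j + 1) ^ 2 * (1 + 2 * j) ^ 2)) ?_ 3 Nat.prime_three ?_ ?_ ?_ ?_ (2 * 2)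
      ((3 * j ^ 2 + 3 * j + 1) ^ 4 * (1 + 2 * j) ^ 2) ?_ ?_
    · push_cast; field_simp
    · push_cast at hx ⊢
      have e1 : x * (x ^ 2 - 81 * (3 * (j : K) ^ 2 + 3 * j + 1))
          = 243 * ((3 * (j : K) ^ 2 + 3 * j + 1) * (1 + 2 * j)) := by
        linear_combination hx
      have e2 := congrArg (· ^ 2) e1
      linear_combination e2 / 19683
    · exact ⟨-2 * (3 * j ^ 2 + 3 * j + 1), by push_cast; ring⟩
    · exact ⟨3 * (3 * j ^ 2 + 3 * j + 1) ^ 2, by push_cast; ring⟩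
    · exact dvd_mul_right _ _
    · rw [pow_two]
      change ¬ (3 : ℤ) * 3 ∣ _
      rw [mul_dvd_mul_iff_left hpZ.ne_zero]
      intro hh
      rcases hpZ.dvd_or_dvd hh with hh | hh
      · exact hsq _ hn (dvd_neg.1 hh)
      · exact hsq _ ht hh
    · intro hh
      rcases hpZ.dvd_or_dvd hh with hh | hh
      · exact hn (hpZ.dvd_of_dvd_pow hh)
      · exact hsq _ ht hh
    · push_cast; ring
  · have hn : ¬ (3 : ℤ) ∣ k ^ 2 + k + 1 := by
      intro hh
      have h1 : (3 : ℤ) ∣ (k - 1) ^ 2 := by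
        have := hh.sub (dvd_mul_right (3 : ℤ) k)
        rwa [show k ^ 2 + k + 1 - 3 * k = (k - 1) ^ 2 by ring] at this
      have := hpZ.dvd_of_dvd_pow h1
      omega
    refine val_eisen h3 (r - 1) ?_ (3 - 3 * k) (-9 * k) (3 * (-(2 * k + 1))) ?_ 3 Nat.prime_three
      ?_ ?_ ?_ ?_ (2 * 2) ((k ^ 2 + k + 1) ^ 2) ?_ ?_
    · intro q hq
      exact hrat (q + 1) (by rw [map_add, ← hq]; simp)
    · push_cast at hr ⊢
      linear_combination hr
    · exact ⟨1 - k, by push_cast; ring⟩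
    · exact ⟨-3 * k, by push_cast; ring⟩
    · exact dvd_mul_right _ _
    · rw [pow_two]
      change ¬ (3 : ℤ) * 3 ∣ _
      rw [mul_dvd_mul_iff_left hpZ.ne_zero]
      omega
    · exact hsq _ hn
    · push_cast; ring

theorem stmt7 (m : ℤ) (K : Type*) [Field K] [NumberField K]
    (hK : IsSplittingField ℚ K (f m)) :
    NumberField.discr K = frakf m ^ 2 := by
  obtain ⟨r, hr, h3⟩ := splitting_finrank m hK
  have hpr : ∀ p ∈ ramifiedPrimes m, p.Prime := fun p hp =>
    Nat.prime_of_mem_primeFactors (Finset.mem_filter.1 hp).1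
  have hne3 : 3 ∉ ramifiedPrimes m := fun h => (Finset.mem_filter.1 h).2.1 rfl
  set P : ℕ := ∏ p ∈ ramifiedPrimes m, p with hP
  have hP0 : P ≠ 0 := Finset.prod_ne_zero_iff.2 fun p hp => (hpr p hp).ne_zero
  set c : ℕ := if 3 ∣ m ∧ m % 27 ≠ 12 then 9 else 1 with hc
  have hc0 : c ≠ 0 := by rw [hc]; split_ifs <;> norm_num
  have hF : frakf m = ((c * P : ℕ) : ℤ) := by
    unfold frakf
    rw [hc, hP]
    push_cast
    rfl
  have hPval : ∀ q : ℕ, q.Prime → P.factorization q = if q ∈ ramifiedPrimes m then 1 else 0 := by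
    intro q hq
    rw [hP, Nat.factorization_prod_apply fun p hp => (hpr p hp).ne_zero]
    rw [Finset.sum_congr rfl fun p hp => by
      rw [(hpr p hp).factorization, Finsupp.single_apply]]
    simp
  have hcval : ∀ q : ℕ, q.Prime → c.factorization q =
      if q = 3 then (if 3 ∣ m ∧ m % 27 ≠ 12 then 2 else 0) else 0 := by
    intro q hq
    rw [hc]
    split_ifs with h1 h2 h2
    · rw [h2, show 9 = 3 ^ 2 by norm_num, Nat.prime_three.factorization_pow]; simp
    · rw [show 9 = 3 ^ 2 by norm_num, Nat.prime_three.factorization_pow,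
        Finsupp.single_eq_of_ne h2]
    · simp
    · simp
  have hpos : 0 < NumberField.discr K := by
    obtain ⟨M, hM, -⟩ := cubic_key h3 r (root_irrational m r hr) (-m) (-(m + 3)) (-1)
      (by push_cast; linear_combination hr)
    have : (m ^ 2 + 3 * m + 9) ^ 2 = M ^ 2 * NumberField.discr K := by rw [← hM]; ring
    have h2 : 0 < M ^ 2 * NumberField.discr K := this ▸ pow_pos (N_pos m) 2
    exact pos_of_mul_pos_right h2 (sq_nonneg M)
  have key : (NumberField.discr K).natAbs = (c * P) ^ 2 := by
    apply Nat.eq_of_factorization_eq (Int.natAbs_ne_zero.2 hpos.ne')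
      (pow_ne_zero _ (mul_ne_zero hc0 hP0))
    intro q
    by_cases hq : q.Prime
    · rw [Nat.factorization_pow, Nat.factorization_mul hc0 hP0]
      simp only [Finsupp.smul_apply, Finsupp.add_apply, smul_eq_mul]
      rw [hPval q hq, hcval q hq, Nat.factorization_def _ hq]
      change padicValInt q _ = _
      by_cases h : q = 3
      · subst h
        rw [val_three h3 m r hr, if_neg hne3]
        simp
      · rw [val_ne_three h3 m r hr q hq h]
        simp [h]
    · rw [Nat.factorization_eq_zero_of_not_prime _ hq, Nat.factorization_eq_zero_of_not_prime _ hq]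
  rw [hF, ← Int.natAbs_of_nonneg hpos.le, key]
  push_cast
  rfl
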